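/- arXiv:1308.5400 — 2 statements merged into one kernel-verified Lean document; each statement's English description precedes it below -/
import Mathlib

section
/- Let G be a finite simple graph on vertex set [n] with edge ideal I = I_G ⊂ S = K[x_1,...,x_n]. Then depth S/I^2 = 0 if and only if G is a connected graph containing a 3-cycle C such that every vertex of G not in C is adjacent to some vertex of C. -/
open MvPolynomial

open scoped Pointwise in
/-- A monomial lies in the square of the edge ideal iff it is divisible by a product of two edges. -/
theorem monomial_mem_edgeIdeal_sq_iff {V K : Type*} [DecidableEq V] [Field K] (G : SimpleGraph V)
    (a : V →₀ ℕ) :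
    monomial a (1 : K) ∈
        Ideal.span {m : MvPolynomial V K | ∃ i j : V, G.Adj i j ∧ m = X i * X j} ^ 2 ↔
      ∃ i j k l : V, G.Adj i j ∧ G.Adj k l ∧ ∀ v,
        (if i = v then 1 else 0) + (if j = v then 1 else 0) + (if k = v then 1 else 0) +
          (if l = v then 1 else 0) ≤ a v := by
  have hset : {m : MvPolynomial V K | ∃ i j : V, G.Adj i j ∧ m = X i * X j} *
      {m : MvPolynomial V K | ∃ i j : V, G.Adj i j ∧ m = X i * X j} =
      (fun s => monomial s (1 : K)) '' {s : V →₀ ℕ | ∃ i j k l : V, G.Adj i j ∧ G.Adj k l ∧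
        s = Finsupp.single i 1 + Finsupp.single j 1 + Finsupp.single k 1 +
          Finsupp.single l 1} := by
    ext m
    simp only [Set.mem_mul, Set.mem_image, Set.mem_ofPred_eq]
    constructor
    · rintro ⟨_, ⟨i, j, hij, rfl⟩, _, ⟨k, l, hkl, rfl⟩, rfl⟩
      exact ⟨_, ⟨i, j, k, l, hij, hkl, rfl⟩, by simp [X, monomial_mul, add_assoc]⟩
    · rintro ⟨_, ⟨i, j, k, l, hij, hkl, rfl⟩, rfl⟩
      exact ⟨_, ⟨i, j, hij, rfl⟩, _, ⟨k, l, hkl, rfl⟩, by simp [X, monomial_mul, add_assoc]⟩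
  rw [pow_two, Ideal.span_mul_span', hset, mem_ideal_span_monomial_image]
  classical
  rw [support_monomial, if_neg one_ne_zero]
  simp only [Finset.mem_singleton, forall_eq, Set.mem_ofPred_eq]
  constructor
  · rintro ⟨_, ⟨i, j, k, l, hij, hkl, rfl⟩, h⟩
    exact ⟨i, j, k, l, hij, hkl, fun v => by simpa [Finsupp.single_apply] using h v⟩
  · rintro ⟨i, j, k, l, hij, hkl, h⟩
    exact ⟨_, ⟨i, j, k, l, hij, hkl, rfl⟩, fun v => by simpa [Finsupp.single_apply] using h v⟩

/-- A graph with a dominating triangle is connected. -/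
theorem SimpleGraph.connected_of_dominating_triangle {V : Type*} (G : SimpleGraph V) {a b c : V}
    (hab : G.Adj a b) (hac : G.Adj a c)
    (h : ∀ v, v ≠ a → v ≠ b → v ≠ c → (G.Adj v a ∨ G.Adj v b ∨ G.Adj v c)) : G.Connected := by
  have hr : ∀ v, G.Reachable v a := by
    intro v
    by_cases h1 : v = a
    · exact h1 ▸ .rfl
    by_cases h2 : v = b
    · exact h2 ▸ hab.symm.reachable
    by_cases h3 : v = c
    · exact h3 ▸ hac.symm.reachable
    rcases h v h1 h2 h3 with h | h | h
    · exact h.reachable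
    · exact h.reachable.trans hab.symm.reachable
    · exact h.reachable.trans hac.symm.reachable
  exact { preconnected := fun u v => (hr u).trans (hr v).symm, nonempty := ⟨a⟩ }

/-- If an exponent vector is not divisible by a product of two edges, but becomes so after
multiplication by any variable, then the graph has a dominating triangle. -/
theorem SimpleGraph.exists_dominating_triangle {V : Type*} [DecidableEq V] [Nonempty V]
    (G : SimpleGraph V) (a : V → ℕ)
    (hn : ∀ i j k l : V, G.Adj i j → G.Adj k l → ¬ ∀ v,
      (if i = v then 1 else 0) + (if j = v then 1 else 0) + (if k = v then 1 else 0) +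
        (if l = v then 1 else 0) ≤ a v)
    (hs : ∀ x : V, ∃ i j k l : V, G.Adj i j ∧ G.Adj k l ∧ ∀ v,
      (if i = v then 1 else 0) + (if j = v then 1 else 0) + (if k = v then 1 else 0) +
        (if l = v then 1 else 0) ≤ (if x = v then 1 else 0) + a v) :
    ∃ j k q : V, G.Adj j k ∧ G.Adj j q ∧ G.Adj k q ∧
      ∀ v, v ≠ j → v ≠ k → v ≠ q → (G.Adj v j ∨ G.Adj v k ∨ G.Adj v q) := by
  have hs' : ∀ x : V, ∃ j k l : V, G.Adj x j ∧ G.Adj k l ∧ ∀ v,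
      (if j = v then 1 else 0) + (if k = v then 1 else 0) + (if l = v then 1 else 0) ≤ a v := by
    intro x
    obtain ⟨i, j, k, l, hij, hkl, h⟩ := hs x
    by_cases h1 : i = x
    · subst h1
      exact ⟨j, k, l, hij, hkl, fun v => by have := h v; omega⟩
    by_cases h2 : j = x
    · subst h2
      exact ⟨i, k, l, hij.symm, hkl, fun v => by have := h v; omega⟩
    by_cases h3 : k = x
    · subst h3
      exact ⟨l, i, j, hkl, hij, fun v => by have := h v; omega⟩
    by_cases h4 : l = x
    · subst h4
      exact ⟨k, i, j, hkl.symm, hij, fun v => by have := h v; omega⟩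
    refine absurd (fun v => ?_) (hn i j k l hij hkl)
    have := h v
    by_cases hx : x = v
    · subst hx; simp [h1, h2, h3, h4]
    · simpa [hx] using this
  have hsupp : ∀ x : V, 1 ≤ a x → ∃ j q : V, G.Adj x j ∧ G.Adj x q ∧ ∀ v,
      (if j = v then 1 else 0) + (if x = v then 1 else 0) + (if q = v then 1 else 0) ≤ a v := by
    intro x hx
    obtain ⟨j, p, q, hxj, hpq, h⟩ := hs' x
    by_cases h1 : p = x
    · subst h1; exact ⟨j, q, hxj, hpq, h⟩
    by_cases h2 : q = x
    · subst h2; exact ⟨j, p, hxj, hpq.symm, fun v => by have := h v; omega⟩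
    refine absurd (fun v => ?_) (hn x j p q hxj hpq)
    have := h v
    have := hxj.ne
    grind
  obtain ⟨x⟩ := ‹Nonempty V›
  obtain ⟨_, k, _, _, _, h0⟩ := hs' x
  have hk : 1 ≤ a k := by have := h0 k; simp only [if_true] at this; omega
  obtain ⟨j, q, hkj, hkq, h1⟩ := hsupp k hk
  have hj : 1 ≤ a j := by have := h1 j; simp only [if_true] at this; omega
  obtain ⟨m, s, hjm, hjs, h2⟩ := hsupp j hj
  have hjq : G.Adj j q := by
    by_contra hc
    have hmem : ∀ t, G.Adj j t → 1 ≤ a t → t = k := by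
      intro t hjt ht
      by_contra htk
      refine hn j t k q hjt hkq fun v => ?_
      have := h1 v
      have := hjt.ne
      grind
    have hm : m = k := hmem m hjm (by have := h2 m; simp only [if_true] at this; omega)
    have hs : s = k := hmem s hjs (by have := h2 s; simp only [if_true] at this; omega)
    subst hm hs
    refine hn s j s q hkj hkq fun v => ?_
    have := h1 v
    have := h2 v
    have := hkj.ne
    have := hkq.ne
    grind
  refine ⟨j, k, q, hkj.symm, hjq, hkq, fun v _ _ _ => ?_⟩
  obtain ⟨w, p, r, hvw, hpr, h3⟩ := hs' v
  by_contra! hv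
  have hwj : w ≠ j := by rintro rfl; exact hv.1 hvw
  have hwk : w ≠ k := by rintro rfl; exact hv.2.1 hvw
  have hwq : w ≠ q := by rintro rfl; exact hv.2.2 hvw
  have hw : 1 ≤ a w := by have := h3 w; simp only [if_true] at this; omega
  obtain ⟨t, _, hwt, _, h4⟩ := hsupp w hw
  have key : ∀ y z, G.Adj y z → t ≠ y → t ≠ z → w ≠ y → w ≠ z → 1 ≤ a y → 1 ≤ a z → False := by
    intro y z hyz hty htz hwy hwz hy hz
    refine hn w t y z hwt hyz fun v => ?_
    have := h4 v
    have := hyz.ne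
    clear hn hs hs' hsupp h0 h1 h2 h3 h4
    grind
  have hq : 1 ≤ a q := by have := h1 q; simp only [if_true] at this; omega
  by_cases htj : t = j
  · subst htj
    exact key k q hkq hkj.ne' hjq.ne hwk hwq hk hq
  by_cases htk : t = k
  · subst htk
    exact key j q hjq hkj.ne hkq.ne hwj hwq hj hq
  exact key k j hkj htk htj hwk hwj hk hj

/-- `depth S/I_G² = 0` iff `G` is connected, contains a triangle, and every vertex
outside the triangle is adjacent to one of its vertices. Depth zero is expressed by
the existence of a monomial socle element. -/
theorem stmt2 (n : ℕ) (hn : 1 ≤ n) (K : Type*) [Field K]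
    (G : SimpleGraph (Fin n))
    (I : Ideal (MvPolynomial (Fin n) K))
    (hI : I = Ideal.span {m : MvPolynomial (Fin n) K | ∃ i j : Fin n, G.Adj i j ∧ m = X i * X j}) :
    (∃ a : Fin n →₀ ℕ,
        (monomial a (1 : K)) ∉ I ^ 2 ∧ ∀ i : Fin n, X i * monomial a (1 : K) ∈ I ^ 2)
      ↔ (G.Connected ∧ ∃ a b c : Fin n, G.Adj a b ∧ G.Adj a c ∧ G.Adj b c ∧
          ∀ v : Fin n, v ≠ a → v ≠ b → v ≠ c → (G.Adj v a ∨ G.Adj v b ∨ G.Adj v c)) := by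
  subst hI
  have hX : ∀ (i : Fin n) (a : Fin n →₀ ℕ),
      X i * monomial a (1 : K) = monomial (Finsupp.single i 1 + a) 1 := by
    intro i a; simp [X, monomial_mul]
  simp only [hX, monomial_mem_edgeIdeal_sq_iff, Finsupp.add_apply, Finsupp.single_apply]
  constructor
  · rintro ⟨a, ha, hs⟩
    have : Nonempty (Fin n) := ⟨⟨0, hn⟩⟩
    obtain ⟨j, k, q, hjk, hjq, hkq, h⟩ := G.exists_dominating_triangle a
      (fun i j k l hij hkl h => ha ⟨i, j, k, l, hij, hkl, h⟩) hs
    exact ⟨G.connected_of_dominating_triangle hjk hjq h, j, k, q, hjk, hjq, hkq, h⟩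
  · rintro ⟨-, a, b, c, hab, hac, hbc, h⟩
    refine ⟨Finsupp.single a 1 + Finsupp.single b 1 + Finsupp.single c 1, ?_, ?_⟩
    · rintro ⟨i, j, k, l, -, -, hle⟩
      have := Finset.sum_le_sum fun v (_ : v ∈ Finset.univ) => hle v
      simp [Finsupp.single_apply, Finset.sum_add_distrib] at this
    · intro v
      simp only [Finsupp.add_apply, Finsupp.single_apply]
      by_cases h1 : v = a
      · exact ⟨a, b, a, c, hab, hac, fun x => by rw [h1]; omega⟩
      by_cases h2 : v = b
      · exact ⟨b, a, b, c, hab.symm, hbc, fun x => by rw [h2]; omega⟩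
      by_cases h3 : v = c
      · exact ⟨c, a, c, b, hac.symm, hbc.symm, fun x => by rw [h3]; omega⟩
      rcases h v h1 h2 h3 with h | h | h
      · exact ⟨v, a, b, c, h, hbc, fun x => by omega⟩
      · exact ⟨v, b, a, c, h, hac, fun x => by omega⟩
      · exact ⟨v, c, a, b, h, hab, fun x => by omega⟩
end

section
/- Let Δ be a simplicial complex on [n] with facet ideal I = I(Δ), let k ≥ 1, and assume (x_1···x_n)^{k−1} ∉ I^k. Then x_j·(x_1···x_n)^{k−1} ∈ I^k for all j = 1,...,n if and only if for each j = 1,...,n there exist facets F_1,...,F_k ∈ F(Δ) with F_1 ∩ ··· ∩ F_k = {j}. -/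
open MvPolynomial

/-- The product of the variables in a finset is a monomial. -/
theorem prod_X_eq_monomial_sum_single {σ R : Type*} [CommSemiring R] (F : Finset σ) :
    ∏ i ∈ F, (X i : MvPolynomial σ R) = monomial (∑ i ∈ F, Finsupp.single i 1) 1 := by
  rw [monomial_sum_one]
  rfl

open scoped Pointwise in
/-- A monomial lies in the `k`-th power of the ideal generated by the squarefree monomials
indexed by `ℱ` iff it is divisible by a product of `k` generators, i.e. iff some `k` members
of `ℱ` cover each index at most as often as its exponent. -/
theorem monomial_mem_span_prod_X_pow_iff {σ R : Type*} [DecidableEq σ] [CommSemiring R]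
    [Nontrivial R] (ℱ : Set (Finset σ)) (k : ℕ) (a : σ →₀ ℕ) :
    (monomial a (1 : R)) ∈
        Ideal.span ((fun F : Finset σ => ∏ i ∈ F, (X i : MvPolynomial σ R)) '' ℱ) ^ k ↔
      ∃ F : Fin k → Finset σ, (∀ i, F i ∈ ℱ) ∧
        ∀ v, (Finset.univ.filter fun i => v ∈ F i).card ≤ a v := by
  have hset : ((fun F : Finset σ => ∏ i ∈ F, (X i : MvPolynomial σ R)) '' ℱ) ^ k =
      (fun s => monomial s (1 : R)) ''
        {s | ∃ F : Fin k → Finset σ, (∀ i, F i ∈ ℱ) ∧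
          s = ∑ i, ∑ v ∈ F i, Finsupp.single v 1} := by
    ext p
    simp only [Set.mem_pow, List.prod_ofFn, Set.mem_image, Set.mem_ofPred_eq]
    constructor
    · rintro ⟨f, rfl⟩
      choose F hF hFf using fun i => (f i).2
      refine ⟨_, ⟨F, hF, rfl⟩, ?_⟩
      rw [monomial_sum_one]
      refine Finset.prod_congr rfl fun i _ => ?_
      rw [← hFf i, ← prod_X_eq_monomial_sum_single]
    · rintro ⟨_, ⟨F, hF, rfl⟩, rfl⟩
      refine ⟨fun i => ⟨_, F i, hF i, rfl⟩, ?_⟩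
      rw [monomial_sum_one]
      exact Finset.prod_congr rfl fun i _ => prod_X_eq_monomial_sum_single _
  have hcount (F : Fin k → Finset σ) (v : σ) :
      (∑ i, ∑ w ∈ F i, Finsupp.single w 1 : σ →₀ ℕ) v =
        (Finset.univ.filter fun i => v ∈ F i).card := by
    simp [Finsupp.single_apply]
  rw [Ideal.span, Submodule.span_pow, hset, ← Ideal.span, mem_ideal_span_monomial_image]
  classical
  rw [support_monomial, if_neg one_ne_zero]
  simp only [Finset.mem_singleton, forall_eq, Set.mem_ofPred_eq]
  constructor
  · rintro ⟨_, ⟨F, hF, rfl⟩, hle⟩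
    exact ⟨F, hF, fun v => hcount F v ▸ hle v⟩
  · rintro ⟨F, hF, hle⟩
    exact ⟨_, ⟨F, hF, rfl⟩, fun v => (hcount F v).trans_le (hle v)⟩

/-- Assume `(x₁⋯xₙ)^(k-1) ∉ I^k` for the facet ideal `I` of a simplicial complex
with facet set `ℱ`. Then `xⱼ·(x₁⋯xₙ)^(k-1) ∈ I^k` for all `j` iff for each `j`
there are `k` facets whose intersection is `{j}`. -/
theorem stmt7 (n : ℕ) (K : Type*) [Field K]
    (ℱ : Set (Finset (Fin n))) (hne : ∀ F ∈ ℱ, F.Nonempty)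
    (I : Ideal (MvPolynomial (Fin n) K))
    (hI : I = Ideal.span ((fun F : Finset (Fin n) => ∏ i ∈ F, (X i : MvPolynomial (Fin n) K)) '' ℱ))
    (k : ℕ) (hk : 1 ≤ k)
    (hnotin : (∏ i : Fin n, (X i : MvPolynomial (Fin n) K)) ^ (k - 1) ∉ I ^ k) :
    (∀ j : Fin n, X j * (∏ i : Fin n, (X i : MvPolynomial (Fin n) K)) ^ (k - 1) ∈ I ^ k)
      ↔ (∀ j : Fin n, ∃ F : Fin k → Finset (Fin n),
          (∀ i, F i ∈ ℱ) ∧ Finset.univ.inf F = {j}) := by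
  have hpow : (∏ i : Fin n, (X i : MvPolynomial (Fin n) K)) ^ (k - 1) =
      monomial ((k - 1) • ∑ i : Fin n, Finsupp.single i 1) 1 := by
    rw [prod_X_eq_monomial_sum_single, monomial_pow, one_pow]
  have hX (j : Fin n) : (X j : MvPolynomial (Fin n) K) *
      monomial ((k - 1) • ∑ i : Fin n, Finsupp.single i 1) 1 =
      monomial (Finsupp.single j 1 + (k - 1) • ∑ i : Fin n, Finsupp.single i 1) 1 := by
    rw [X, monomial_mul, one_mul]
  have hexp (v : Fin n) : ((k - 1) • ∑ i : Fin n, Finsupp.single i 1 : Fin n →₀ ℕ) v = k - 1 := by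
    simp [Finsupp.single_apply]
  rw [hpow, hI, monomial_mem_span_prod_X_pow_iff] at hnotin
  simp only [hexp] at hnotin
  simp only [hpow, hX, hI, monomial_mem_span_prod_X_pow_iff, Finsupp.add_apply, hexp]
  have hlt (F : Fin k → Finset (Fin n)) (v : Fin n) :
      (Finset.univ.filter fun i => v ∈ F i).card ≤ k - 1 ↔ v ∉ Finset.univ.inf F := by
    have hle := Finset.card_filter_le (Finset.univ : Finset (Fin k)) (fun i => v ∈ F i)
    have heq := Finset.card_filter_eq_iff (s := (Finset.univ : Finset (Fin k)))
      (p := fun i => v ∈ F i)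
    rw [Finset.mem_inf, ← heq]
    rw [Finset.card_univ, Fintype.card_fin] at *
    omega
  refine forall_congr' fun j => exists_congr fun F => and_congr_right fun hF => ?_
  constructor
  · intro h
    have hother (v : Fin n) (hv : v ≠ j) : v ∉ Finset.univ.inf F := by
      simpa [hlt, Finsupp.single_apply, hv.symm] using h v
    ext v
    rw [Finset.mem_singleton]
    refine ⟨fun hv => by_contra fun hvj => hother v hvj hv, ?_⟩
    rintro rfl
    by_contra hv
    refine hnotin ⟨F, hF, fun w => (hlt F w).2 ?_⟩
    by_cases hw : w = v
    · exact hw ▸ hv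
    · exact hother w hw
  · intro h v
    by_cases hv : v = j
    · subst hv
      have := Finset.card_filter_le (Finset.univ : Finset (Fin k)) (fun i => v ∈ F i)
      rw [Finset.card_univ, Fintype.card_fin] at this
      rw [Finsupp.single_eq_same]
      omega
    · exact ((hlt F v).2 (by simpa [h] using hv)).trans (Nat.le_add_left _ _)
end
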